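/- arXiv:1101.0532 — 2 statements merged into one kernel-verified Lean document; each statement's English description precedes it below -/
import Mathlib

section
/- Let A be a finitely generated additive commutative group. Define the following moves on vectors V : Fin g ⊕ Fin g → A (with g ranging over ℕ) whose entries generate A: (Λ₁) replace V by the vector i ↦ ∑_k (P i k) • V k for some P in the symplectic group Sp(Fin g, ℤ); (Λ₂) replace V : Fin g ⊕ Fin g → A by the vector V' : Fin (g+1) ⊕ Fin (g+1) → A with V'(Sum.inl (Fin.castSucc j)) = V(Sum.inl j) and V'(Sum.inr (Fin.castSucc j)) = V(Sum.inr j) for all j, V'(Sum.inl (Fin.last g)) = 0, and V'(Sum.inr (Fin.last g)) = y, for some y ∈ A. Let ≈ be the equivalence relation generated by these moves. Then two generating vectors V₁ : Fin g₁ ⊕ Fin g₁ → A and V₂ : Fin g₂ ⊕ Fin g₂ → A satisfy V₁ ≈ V₂ if and only if their wedge invariants in ⋀²_ℤ A coincide: ∑_j V₁(Sum.inl j) ∧ V₁(Sum.inr j) = ∑_j V₂(Sum.inl j) ∧ V₂(Sum.inr j). (This is the algebraic content of Proposition 30: the quotient of the set of full colouring vectors by the Λ₁- and Λ₂-moves is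 in bijection with A ∧ A via φ.) -/
open Matrix

/-- The wedge `v ∧ w` of two elements of an additive commutative group `A` (regarded as a
`ℤ`-module), as an element of the second exterior power `⋀²_ℤ A`. -/
noncomputable def wedge {A : Type*} [AddCommGroup A] (v w : A) : ⋀[ℤ]^2 A :=
  ⟨ExteriorAlgebra.ιMulti ℤ 2 ![v, w],
    ExteriorAlgebra.ιMulti_range ℤ 2 (Set.mem_range_self ![v, w])⟩

/-- The sigma type of pairs `(g, V)` of a natural number `g` and a generating colouring
vector `V : Fin g ⊕ Fin g → A`. -/
def GenVec (A : Type*) [AddCommGroup A] : Type _ :=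
  Σ g : ℕ, {V : Fin g ⊕ Fin g → A // AddSubgroup.closure (Set.range V) = ⊤}

/-- The stabilization of a colouring vector used in the `Λ₂`-move: the two new entries are
`0` (in the `inl` half) and `y` (in the `inr` half). -/
def stabilize {A : Type*} [AddCommGroup A] {g : ℕ} (V : Fin g ⊕ Fin g → A) (y : A) :
    Fin (g + 1) ⊕ Fin (g + 1) → A :=
  Sum.elim (Fin.snoc (fun j => V (Sum.inl j)) 0) (Fin.snoc (fun j => V (Sum.inr j)) y)

/-- The `Λ₁`- and `Λ₂`-moves on generating colouring vectors. -/
inductive LambdaMove {A : Type*} [AddCommGroup A] : GenVec A → GenVec A → Prop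
  | lambda1 {g : ℕ} (V : Fin g ⊕ Fin g → A)
      (hV : AddSubgroup.closure (Set.range V) = ⊤)
      (P : Matrix (Fin g ⊕ Fin g) (Fin g ⊕ Fin g) ℤ)
      (hP : P ∈ Matrix.symplecticGroup (Fin g) ℤ)
      (hW : AddSubgroup.closure (Set.range fun i => ∑ k, P i k • V k) = ⊤) :
      LambdaMove ⟨g, V, hV⟩ ⟨g, fun i => ∑ k, P i k • V k, hW⟩
  | lambda2 {g : ℕ} (V : Fin g ⊕ Fin g → A)
      (hV : AddSubgroup.closure (Set.range V) = ⊤) (y : A)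
      (hW : AddSubgroup.closure (Set.range (stabilize V y)) = ⊤) :
      LambdaMove ⟨g, V, hV⟩ ⟨g + 1, stabilize V y, hW⟩

/-
Writing `V` as the multiset of its handles `(V (inl j), V (inr j))`, the moves become relations
between multisets. Stably, that is, after adding handles whose entries generate `A`, these relations
form a congruence, and in the quotient the class of the handle `(a, b)` is biadditive and
alternating in `a` and `b`: the symplectic matrices of genus one and two give these laws,
once handles `(0, y)` are discarded. The classes therefore factor through `⋀²_ℤ A`, and the
stabilization is undone by `Λ₂`-moves, which add the handles `(0, y)` with `y` in a generating set.
-/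

open Relation

section

variable {A ι κ : Type*} [AddCommGroup A]

section Wedge

theorem wedge_eq_ιMulti (v w : A) : wedge v w = exteriorPower.ιMulti ℤ 2 ![v, w] := rfl

theorem wedge_self (u : A) : wedge u u = 0 :=
  (exteriorPower.ιMulti ℤ 2).map_eq_zero_of_eq ![u, u] (i := 0) (j := 1) rfl (by decide)

theorem wedge_add_left (u v w : A) : wedge (u + v) w = wedge u w + wedge v w :=
  (exteriorPower.ιMulti ℤ 2).map_vecCons_add ![w] u v

theorem wedge_swap (u v : A) : wedge u v = -wedge v u := by
  have h := (exteriorPower.ιMulti ℤ 2).map_swap ![v, u] (i := 0) (j := 1) (by decide)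
  rwa [show ![v, u] ∘ Equiv.swap 0 1 = ![u, v] by ext i; fin_cases i <;> rfl] at h

theorem wedge_add_right (u v w : A) : wedge u (v + w) = wedge u v + wedge u w := by
  rw [wedge_swap, wedge_add_left, neg_add, ← wedge_swap, ← wedge_swap]

/-- The wedge as a biadditive map. -/
noncomputable def wedgeHom : A →+ A →+ ⋀[ℤ]^2 A :=
  AddMonoidHom.mk' (fun u => AddMonoidHom.mk' (wedge u) (wedge_add_right u))
    fun u v => AddMonoidHom.ext fun w => wedge_add_left u v w

theorem wedgeHom_apply (u v : A) : wedgeHom u v = wedge u v := rfl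

theorem wedge_zero_left (v : A) : wedge 0 v = 0 := by
  rw [← wedgeHom_apply, map_zero, AddMonoidHom.zero_apply]

variable {G : Type*} [AddCommGroup G] {f : A → A → G}

/-- The homomorphism out of the exterior square induced by a biadditive map `f` with
`f a a = 0`. -/
noncomputable def wedgeLift (f : A → A → G) (hleft : ∀ a b c, f (a + b) c = f a c + f b c)
    (hright : ∀ a b c, f a (b + c) = f a b + f a c) (hself : ∀ a, f a a = 0) : ⋀[ℤ]^2 A →ₗ[ℤ] G :=
  exteriorPower.alternatingMapLinearEquiv
    { toFun := fun v => f (v 0) (v 1)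
      map_update_add' := fun _ i _ _ => by fin_cases i <;> simp [hleft, hright]
      map_update_smul' := fun v i n x => by
        fin_cases i
        · simpa using map_zsmul (AddMonoidHom.mk' (f · (v 1)) fun a b => hleft a b (v 1)) n x
        · simpa using map_zsmul (AddMonoidHom.mk' (f (v 0)) (hright (v 0))) n x
      map_eq_zero_of_eq' := fun v i j hv hij => by
        have h01 : v 0 = v 1 := by fin_cases i <;> fin_cases j <;> simp_all
        rw [h01, hself] }

theorem wedgeLift_wedge (hleft : ∀ a b c, f (a + b) c = f a c + f b c)
    (hright : ∀ a b c, f a (b + c) = f a b + f a c) (hself : ∀ a, f a a = 0) (a b : A) :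
    wedgeLift f hleft hright hself (wedge a b) = f a b := by
  rw [wedge_eq_ιMulti, wedgeLift, exteriorPower.alternatingMapLinearEquiv_apply_ιMulti]
  rfl

end Wedge

/-- The action of integer matrices on vectors with entries in `A`, as in the `Λ₁`-move. -/
def matrixAct [Fintype ι] (P : Matrix ι ι ℤ) (V : ι → A) : ι → A := fun i => ∑ k, P i k • V k

theorem matrixAct_one [Fintype ι] [DecidableEq ι] (V : ι → A) : matrixAct 1 V = V := by
  ext i
  simp [matrixAct, Matrix.one_apply]

section WedgeForm

variable [Fintype ι]

/-- The value at `V` of the `⋀²_ℤ A`-valued form with coefficient matrix `M`. -/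
noncomputable def wedgeForm (M : Matrix ι ι ℤ) (V : ι → A) : ⋀[ℤ]^2 A :=
  ∑ k, ∑ l, M k l • wedge (V k) (V l)

theorem wedgeForm_sub (M N : Matrix ι ι ℤ) (V : ι → A) :
    wedgeForm (M - N) V = wedgeForm M V - wedgeForm N V := by
  simp only [wedgeForm, Matrix.sub_apply, sub_smul, Finset.sum_sub_distrib]

theorem wedgeForm_eq_zero_of_isSymm {M : Matrix ι ι ℤ} (hM : M.IsSymm) (V : ι → A) :
    wedgeForm M V = 0 := by
  rw [wedgeForm, ← Fintype.sum_prod_type']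
  refine Finset.sum_ninvolution Prod.swap (fun p => ?_) (fun p hp hfix => hp ?_)
    (fun _ => Finset.mem_univ _) fun _ => Prod.swap_swap _
  · rw [Prod.fst_swap, Prod.snd_swap, hM.apply, wedge_swap (V p.2), smul_neg, add_neg_cancel]
  · rw [show p.2 = p.1 from congrArg Prod.fst hfix, wedge_self, smul_zero]

theorem wedge_sum_smul_sum_smul (a b : ι → ℤ) (V : ι → A) :
    wedge (∑ k, a k • V k) (∑ l, b l • V l) = ∑ k, ∑ l, (a k * b l) • wedge (V k) (V l) := by
  simp only [← wedgeHom_apply, map_sum, AddMonoidHom.finsetSum_apply, map_zsmul,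
    AddMonoidHom.zsmul_apply, smul_smul, Finset.smul_sum, mul_comm]
  rw [Finset.sum_comm]

theorem wedgeForm_matrixAct (M P : Matrix ι ι ℤ) (V : ι → A) :
    wedgeForm M (matrixAct P V) = wedgeForm (Pᵀ * M * P) V := by
  have hcoeff (k l : ι) : (Pᵀ * M * P) k l = ∑ i, ∑ j, M i j * (P i k * P j l) := by
    simp only [Matrix.mul_apply, transpose_apply, Finset.sum_mul]
    rw [Finset.sum_comm]
    exact Finset.sum_congr rfl fun i _ => Finset.sum_congr rfl fun j _ => by ring
  calc wedgeForm M (matrixAct P V)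
    _ = ∑ i, ∑ j, ∑ k, ∑ l, (M i j * (P i k * P j l)) • wedge (V k) (V l) := by
      simp only [wedgeForm, matrixAct, wedge_sum_smul_sum_smul, Finset.smul_sum, smul_smul]
    _ = ∑ p : ι × ι, ∑ q : ι × ι,
          (M p.1 p.2 * (P p.1 q.1 * P p.2 q.2)) • wedge (V q.1) (V q.2) := by
      simp only [Fintype.sum_prod_type]
    _ = wedgeForm (Pᵀ * M * P) V := by
      rw [Finset.sum_comm]
      simp only [wedgeForm, hcoeff, Finset.sum_smul, Fintype.sum_prod_type]

end WedgeForm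

section WedgeInvariant

/-- The wedge invariant `φ(V)`. -/
noncomputable def wedgeInvariant [Fintype ι] (V : ι ⊕ ι → A) : ⋀[ℤ]^2 A :=
  ∑ j, wedge (V (Sum.inl j)) (V (Sum.inr j))

variable [Fintype ι] [DecidableEq ι]

theorem wedgeInvariant_eq_wedgeForm (V : ι ⊕ ι → A) :
    wedgeInvariant V = wedgeForm (fromBlocks 0 1 0 0) V := by
  simp [wedgeInvariant, wedgeForm, Fintype.sum_sum_type, Matrix.one_apply]

theorem wedgeInvariant_matrixAct {P : Matrix (ι ⊕ ι) (ι ⊕ ι) ℤ} (hP : P ∈ symplecticGroup ι ℤ)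
    (V : ι ⊕ ι → A) : wedgeInvariant (matrixAct P V) = wedgeInvariant V := by
  set E : Matrix (ι ⊕ ι) (ι ⊕ ι) ℤ := fromBlocks 0 1 0 0
  have hJ : Eᵀ - E = J ι ℤ := by
    simp [E, J, fromBlocks_transpose, sub_eq_add_neg, fromBlocks_neg, fromBlocks_add]
  -- `Pᵀ * E * P` need not equal `E`, but symmetric coefficients do not contribute.
  have hsymm : (Pᵀ * E * P - E).IsSymm := by
    have hPJ := SymplecticGroup.mem_iff'.1 hP
    rw [← hJ, mul_sub, sub_mul] at hPJ
    rw [IsSymm, transpose_sub, transpose_mul, transpose_mul, transpose_transpose, ← mul_assoc]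
    exact sub_eq_sub_iff_sub_eq_sub.1 hPJ
  rw [wedgeInvariant_eq_wedgeForm, wedgeInvariant_eq_wedgeForm, wedgeForm_matrixAct, ← sub_eq_zero,
    ← wedgeForm_sub, wedgeForm_eq_zero_of_isSymm hsymm]

theorem wedgeInvariant_stabilize {g : ℕ} (V : Fin g ⊕ Fin g → A) (y : A) :
    wedgeInvariant (stabilize V y) = wedgeInvariant V := by
  simp [wedgeInvariant, Fin.sum_univ_castSucc, stabilize, wedge_zero_left]

theorem wedgeInvariant_eq_of_eqvGen {X Y : GenVec A} (h : EqvGen LambdaMove X Y) :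
    wedgeInvariant X.2.1 = wedgeInvariant Y.2.1 := by
  induction h with
  | rel X Y h =>
    cases h with
    | lambda1 V _ P hP _ => exact (wedgeInvariant_matrixAct hP V).symm
    | lambda2 V _ y _ => exact (wedgeInvariant_stabilize V y).symm
  | refl => rfl
  | symm _ _ _ ih => exact ih.symm
  | trans _ _ _ _ _ ih₁ ih₂ => exact ih₁.trans ih₂

end WedgeInvariant

section Handles

/-- The multiset of handles of `V`, that is, of its pairs of corresponding `inl` and `inr`
entries; it determines `V` up to the order of the handles. -/
def handles {A : Type*} [Fintype ι] (V : ι ⊕ ι → A) : Multiset (A × A) :=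
  Finset.univ.val.map fun j => (V (Sum.inl j), V (Sum.inr j))

/-- The entries of the handles in `m` generate `A`. -/
def Generates (m : Multiset (A × A)) : Prop :=
  AddSubgroup.closure {x : A | ∃ p ∈ m, p.1 = x ∨ p.2 = x} = ⊤

theorem Generates.mono {k l : Multiset (A × A)} (hk : Generates k) (hkl : k ≤ l) :
    Generates l := by
  refine top_unique (hk.ge.trans (AddSubgroup.closure_mono ?_))
  rintro x ⟨p, hp, hx⟩
  exact ⟨p, Multiset.mem_of_le hkl hp, hx⟩

theorem generates_handles_iff [Fintype ι] {V : ι ⊕ ι → A} :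
    Generates (handles V) ↔ AddSubgroup.closure (Set.range V) = ⊤ := by
  have hrange : {x | ∃ p ∈ handles V, p.1 = x ∨ p.2 = x} = Set.range V := by
    ext x
    simp [handles, exists_or]
  rw [Generates, hrange]

theorem handles_stabilize {g : ℕ} (V : Fin g ⊕ Fin g → A) (y : A) :
    handles (stabilize V y) = handles V + {(0, y)} := by
  simp only [handles, Fin.univ_val_map, List.ofFn_succ_last, stabilize, Sum.elim_inl, Sum.elim_inr,
    Fin.snoc_castSucc, Fin.snoc_last, ← Multiset.coe_add, Multiset.coe_singleton]

theorem exists_handles_eq {A : Type*} (m : Multiset (A × A)) :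
    ∃ (n : ℕ) (V : Fin n ⊕ Fin n → A), handles V = m := by
  refine ⟨m.toList.length,
    Sum.elim (fun j => (m.toList.get j).1) (fun j => (m.toList.get j).2), ?_⟩
  simp only [handles, Sum.elim_inl, Sum.elim_inr, Prod.mk.eta, Fin.univ_val_map, List.ofFn_get,
    Multiset.coe_toList]

theorem exists_genVec_handles_eq {m : Multiset (A × A)} (hm : Generates m) :
    ∃ X : GenVec A, handles X.2.1 = m := by
  obtain ⟨n, V, rfl⟩ := exists_handles_eq m
  exact ⟨⟨n, V, generates_handles_iff.1 hm⟩, rfl⟩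

theorem exists_equiv_of_map_univ_eq {α : Type*} [Fintype ι] [Fintype κ] {f : ι → α} {g : κ → α}
    (h : Finset.univ.val.map f = Finset.univ.val.map g) : ∃ e : ι ≃ κ, ∀ i, g (e i) = f i := by
  classical
  have hfiber (c : α) : Nonempty ({i // f i = c} ≃ {j // g j = c}) := by
    refine ⟨Fintype.equivOfCardEq ?_⟩
    have hcount := congrArg (Multiset.count c) h
    simp only [Multiset.count_map] at hcount
    rw [Fintype.card_subtype, Fintype.card_subtype, Finset.card_def, Finset.card_def]
    simpa only [Finset.filter_val, eq_comm] using hcount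
  exact ⟨Equiv.ofFiberEquiv fun c => (hfiber c).some, Equiv.ofFiberEquiv_map _⟩

theorem exists_equiv_of_handles_eq {A : Type*} [Fintype ι] [Fintype κ] {V : ι ⊕ ι → A}
    {W : κ ⊕ κ → A} (h : handles V = handles W) :
    ∃ e : ι ≃ κ, W ∘ Equiv.sumCongr e e = V := by
  obtain ⟨e, he⟩ := exists_equiv_of_map_univ_eq h
  refine ⟨e, funext ?_⟩
  rintro (i | i)
  · exact congrArg Prod.fst (he i)
  · exact congrArg Prod.snd (he i)

/-- The juxtaposition of the handles of `V` and of `W`. -/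
def blockSum {A : Type*} (V : ι ⊕ ι → A) (W : κ ⊕ κ → A) : (ι ⊕ κ) ⊕ (ι ⊕ κ) → A :=
  Sum.elim V W ∘ Equiv.sumSumSumComm ι κ ι κ

theorem handles_blockSum {A : Type*} [Fintype ι] [Fintype κ] (V : ι ⊕ ι → A) (W : κ ⊕ κ → A) :
    handles (blockSum V W) = handles V + handles W := by
  simp [handles, blockSum, ← Finset.univ_disjSum_univ, Multiset.disjSum, Function.comp_def]

end Handles

section Symplectic

variable {R : Type*} [CommRing R] [DecidableEq κ]

/-- The matrix acting as `P` on the first block of handles and trivially on the second. -/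
def extendByOne (κ : Type*) [DecidableEq κ] (P : Matrix (ι ⊕ ι) (ι ⊕ ι) R) :
    Matrix ((ι ⊕ κ) ⊕ (ι ⊕ κ)) ((ι ⊕ κ) ⊕ (ι ⊕ κ)) R :=
  (fromBlocks P 0 0 1).submatrix (Equiv.sumSumSumComm ι κ ι κ) (Equiv.sumSumSumComm ι κ ι κ)

variable [Fintype ι] [Fintype κ]

theorem matrixAct_extendByOne (P : Matrix (ι ⊕ ι) (ι ⊕ ι) ℤ) (V : ι ⊕ ι → A) (W : κ ⊕ κ → A) :
    matrixAct (extendByOne κ P) (blockSum V W) = blockSum (matrixAct P V) W := by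
  ext ((i | i) | (i | i)) <;>
    simp [matrixAct, extendByOne, blockSum, Fintype.sum_sum_type, Matrix.one_apply]

variable [DecidableEq ι]

theorem submatrix_mem_symplecticGroup {P : Matrix (ι ⊕ ι) (ι ⊕ ι) R} (hP : P ∈ symplecticGroup ι R)
    (e f : κ ≃ ι) :
    P.submatrix (Equiv.sumCongr e e) (Equiv.sumCongr f f) ∈ symplecticGroup κ R := by
  have hJ (e : κ ≃ ι) : J κ R = (J ι R).submatrix (Equiv.sumCongr e e) (Equiv.sumCongr e e) := by
    ext (i | i) (j | j) <;> simp [J, Matrix.one_apply]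
  rw [SymplecticGroup.mem_iff, hJ f, transpose_submatrix, submatrix_mul_equiv, submatrix_mul_equiv,
    SymplecticGroup.mem_iff.1 hP, ← hJ e, ← hJ f]

theorem extendByOne_mem_symplecticGroup {P : Matrix (ι ⊕ ι) (ι ⊕ ι) R}
    (hP : P ∈ symplecticGroup ι R) : extendByOne κ P ∈ symplecticGroup (ι ⊕ κ) R := by
  have hJ : J (ι ⊕ κ) R = (fromBlocks (J ι R) 0 0 (J κ R)).submatrix
      (Equiv.sumSumSumComm ι κ ι κ) (Equiv.sumSumSumComm ι κ ι κ) := by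
    ext ((i | i) | (i | i)) ((j | j) | (j | j)) <;> simp [J, Matrix.one_apply]
  rw [SymplecticGroup.mem_iff, extendByOne, hJ, transpose_submatrix, submatrix_mul_equiv,
    submatrix_mul_equiv, fromBlocks_transpose, fromBlocks_multiply, fromBlocks_multiply]
  simp [SymplecticGroup.mem_iff.1 hP]

theorem eqvGen_of_handles_eq_handles_matrixAct {P : Matrix (ι ⊕ ι) (ι ⊕ ι) ℤ}
    (hP : P ∈ symplecticGroup ι ℤ) (V : ι ⊕ ι → A) {X Y : GenVec A}
    (hX : handles X.2.1 = handles V) (hY : handles Y.2.1 = handles (matrixAct P V)) :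
    EqvGen LambdaMove X Y := by
  obtain ⟨n, X, hXgen⟩ := X
  obtain ⟨n', Y, hYgen⟩ := Y
  obtain ⟨e, rfl⟩ : ∃ e : Fin n ≃ ι, V ∘ Equiv.sumCongr e e = X := exists_equiv_of_handles_eq hX
  obtain ⟨f, rfl⟩ : ∃ f : Fin n' ≃ ι, matrixAct P V ∘ Equiv.sumCongr f f = Y :=
    exists_equiv_of_handles_eq hY
  obtain rfl : n = n' := by simpa using Fintype.card_congr (e.trans f.symm)
  have hact : matrixAct P V ∘ Equiv.sumCongr f f =
      matrixAct (P.submatrix (Equiv.sumCongr f f) (Equiv.sumCongr e e))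
        (V ∘ Equiv.sumCongr e e) := by
    ext i
    exact (Equiv.sum_comp (Equiv.sumCongr e e) fun k => P (Equiv.sumCongr f f i) k • V k).symm
  simp only [hact] at hYgen ⊢
  exact .rel _ _ (.lambda1 _ hXgen _ (submatrix_mem_symplecticGroup hP f e) hYgen)

theorem eqvGen_of_handles_eq {X Y : GenVec A} (h : handles X.2.1 = handles Y.2.1) :
    EqvGen LambdaMove X Y :=
  eqvGen_of_handles_eq_handles_matrixAct (one_mem _) X.2.1 rfl (by rw [matrixAct_one, h])

end Symplectic

section StableEquivalence

/-- Equivalence of multisets of handles under the moves, after adding any handles whose entries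
generate `A`. Without them, neither multiset need come from a generating vector. -/
def StablyEquiv (m₁ m₂ : Multiset (A × A)) : Prop :=
  ∀ k, Generates k → ∀ X Y : GenVec A, handles X.2.1 = m₁ + k → handles Y.2.1 = m₂ + k →
    EqvGen LambdaMove X Y

theorem StablyEquiv.refl (m : Multiset (A × A)) : StablyEquiv m m :=
  fun _ _ _ _ hX hY => eqvGen_of_handles_eq (hX.trans hY.symm)

theorem StablyEquiv.symm {m₁ m₂ : Multiset (A × A)} (h : StablyEquiv m₁ m₂) : StablyEquiv m₂ m₁ :=
  fun k hk X Y hX hY => (h k hk Y X hY hX).symm _ _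

theorem StablyEquiv.trans {m₁ m₂ m₃ : Multiset (A × A)} (h : StablyEquiv m₁ m₂)
    (h' : StablyEquiv m₂ m₃) : StablyEquiv m₁ m₃ := by
  intro k hk X Z hX hZ
  obtain ⟨Y, hY⟩ := exists_genVec_handles_eq (hk.mono (Multiset.le_add_left k m₂))
  exact (h k hk X Y hX hY).trans _ _ _ (h' k hk Y Z hY hZ)

theorem StablyEquiv.add_right {m₁ m₂ : Multiset (A × A)} (h : StablyEquiv m₁ m₂)
    (m : Multiset (A × A)) : StablyEquiv (m₁ + m) (m₂ + m) := fun k hk X Y hX hY =>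
  h (m + k) (hk.mono (Multiset.le_add_left k m)) X Y (hX.trans (add_assoc _ _ _))
    (hY.trans (add_assoc _ _ _))

theorem StablyEquiv.add {m₁ m₂ m₃ m₄ : Multiset (A × A)} (h : StablyEquiv m₁ m₂)
    (h' : StablyEquiv m₃ m₄) : StablyEquiv (m₁ + m₃) (m₂ + m₄) :=
  (h.add_right m₃).trans (by simpa only [add_comm m₂] using h'.add_right m₂)

theorem stablyEquiv_matrixAct [Fintype ι] [DecidableEq ι] {P : Matrix (ι ⊕ ι) (ι ⊕ ι) ℤ}
    (hP : P ∈ symplecticGroup ι ℤ) (V : ι ⊕ ι → A) :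
    StablyEquiv (handles V) (handles (matrixAct P V)) := by
  intro k _ X Y hX hY
  obtain ⟨n, W, rfl⟩ := exists_handles_eq k
  refine eqvGen_of_handles_eq_handles_matrixAct
    (extendByOne_mem_symplecticGroup (κ := Fin n) hP) (blockSum V W) ?_ ?_
  · rw [hX, handles_blockSum]
  · rw [hY, matrixAct_extendByOne, handles_blockSum]

theorem exists_eqvGen_handles_add_singleton (X : GenVec A) (y : A) :
    ∃ Y, EqvGen LambdaMove X Y ∧ handles Y.2.1 = handles X.2.1 + {(0, y)} := by
  have hgen : Generates (handles (stabilize X.2.1 y)) := by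
    rw [handles_stabilize]
    exact (generates_handles_iff.2 X.2.2).mono (Multiset.le_add_right _ _)
  exact ⟨⟨_, _, generates_handles_iff.1 hgen⟩, .rel _ _ (.lambda2 _ X.2.2 y _),
    handles_stabilize X.2.1 y⟩

theorem stablyEquiv_zero_left (y : A) : StablyEquiv {((0 : A), y)} 0 := by
  intro k _ X Y hX hY
  obtain ⟨Z, hYZ, hZ⟩ := exists_eqvGen_handles_add_singleton Y y
  refine (eqvGen_of_handles_eq ?_).trans _ _ _ (hYZ.symm _ _)
  rw [hX, hZ, hY, zero_add, add_comm]

theorem exists_eqvGen_handles_add_map (X : GenVec A) (s : Multiset A) :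
    ∃ Y, EqvGen LambdaMove X Y ∧ handles Y.2.1 = handles X.2.1 + s.map fun y => (0, y) := by
  induction s using Multiset.induction_on with
  | empty => exact ⟨X, .refl X, by simp⟩
  | cons y s ih =>
    obtain ⟨Y, hXY, hY⟩ := ih
    obtain ⟨Z, hYZ, hZ⟩ := exists_eqvGen_handles_add_singleton Y y
    refine ⟨Z, hXY.trans _ _ _ hYZ, ?_⟩
    rw [hZ, hY, Multiset.map_cons, ← Multiset.singleton_add, add_assoc, add_comm {(0, y)}]

theorem StablyEquiv.eqvGen [AddGroup.FG A] {X Y : GenVec A}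
    (h : StablyEquiv (handles X.2.1) (handles Y.2.1)) : EqvGen LambdaMove X Y := by
  obtain ⟨s, hs⟩ := AddGroup.FG.out (H := A)
  have hgen : Generates (s.val.map fun y => ((0 : A), y)) :=
    top_unique (hs.ge.trans (AddSubgroup.closure_mono fun y hy =>
      ⟨(0, y), Multiset.mem_map_of_mem _ hy, .inr rfl⟩))
  obtain ⟨X', hXX', hX'⟩ := exists_eqvGen_handles_add_map X s.val
  obtain ⟨Y', hYY', hY'⟩ := exists_eqvGen_handles_add_map Y s.val
  exact (hXX'.trans _ _ _ (h _ hgen X' Y' hX' hY')).trans _ _ _ (hYY'.symm _ _)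

end StableEquivalence

section HandleClass

/-- Stable equivalence as an additive congruence. -/
def stableCon (A : Type*) [AddCommGroup A] : AddCon (Multiset (A × A)) where
  r := StablyEquiv
  iseqv := ⟨.refl, .symm, .trans⟩
  add' := .add

theorem coe_eq_coe_iff_stablyEquiv {m₁ m₂ : Multiset (A × A)} :
    (m₁ : (stableCon A).Quotient) = m₂ ↔ StablyEquiv m₁ m₂ :=
  AddCon.eq (stableCon A)

/-- The class of the handle `(a, b)` up to stable equivalence. -/
def handleClass (a b : A) : (stableCon A).Quotient := (({(a, b)} : Multiset (A × A)) :)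

theorem handleClass_zero_left (b : A) : handleClass 0 b = 0 :=
  coe_eq_coe_iff_stablyEquiv.2 (stablyEquiv_zero_left b)

theorem handleClass_rotate (a b : A) : handleClass a b = handleClass (-b) a := by
  refine coe_eq_coe_iff_stablyEquiv.2 ?_
  convert stablyEquiv_matrixAct (SymplecticGroup.J_mem Unit ℤ)
    (Sum.elim (fun _ => a) fun _ => b) using 1
  · simp [handles]
  · simp [handles, matrixAct, J]

theorem handleClass_zero_right (a : A) : handleClass a 0 = 0 := by
  rw [handleClass_rotate, neg_zero, handleClass_zero_left]

theorem handleClass_self (a : A) : handleClass a a = 0 := by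
  have hP : fromBlocks 1 0 1 1 ∈ symplecticGroup Unit ℤ := by
    simp [SymplecticGroup.fromBlocks_mem_iff]
  rw [← handleClass_zero_right a]
  refine (coe_eq_coe_iff_stablyEquiv.2 ?_).symm
  convert stablyEquiv_matrixAct hP (Sum.elim (fun _ => a) fun _ => 0) using 1
  · simp [handles]
  · simp [handles, matrixAct]

theorem handleClass_add_left (a b c : A) :
    handleClass (a + b) c = handleClass a c + handleClass b c := by
  have hP : fromBlocks !![1, 1; 0, 1] 0 0 !![1, 0; -1, 1] ∈ symplecticGroup (Fin 2) ℤ := by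
    rw [SymplecticGroup.fromBlocks_mem_iff]
    decide
  have hslide : handleClass a c + handleClass b c = handleClass (a + b) c + handleClass b 0 := by
    refine coe_eq_coe_iff_stablyEquiv.2 ?_
    convert stablyEquiv_matrixAct hP (Sum.elim ![a, b] fun _ => c) using 1
    · simp [handles, Fin.univ_val_map]
      rfl
    · simp [handles, matrixAct, Fin.univ_val_map]
      rfl
  rw [hslide, handleClass_zero_right, add_zero]

theorem handleClass_add_right (a b c : A) :
    handleClass a (b + c) = handleClass a b + handleClass a c := by
  rw [handleClass_rotate, neg_add, handleClass_add_left, ← handleClass_rotate,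
    ← handleClass_rotate]

/-- The class of a handle as an invertible element of the quotient monoid. -/
def handleUnit (a b : A) : AddUnits (stableCon A).Quotient where
  val := handleClass a b
  neg := handleClass (-a) b
  val_neg := by rw [← handleClass_add_left, add_neg_cancel, handleClass_zero_left]
  neg_val := by rw [← handleClass_add_left, neg_add_cancel, handleClass_zero_left]

/-- The map out of the exterior square sending `a ∧ b` to the class of the handle `(a, b)`. -/
noncomputable def ofWedge : ⋀[ℤ]^2 A →ₗ[ℤ] AddUnits (stableCon A).Quotient :=
  wedgeLift handleUnit (fun a b c => AddUnits.ext (handleClass_add_left a b c))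
    (fun a b c => AddUnits.ext (handleClass_add_right a b c))
    fun a => AddUnits.ext (handleClass_self a)

theorem ofWedge_wedge (a b : A) : ofWedge (wedge a b) = handleUnit a b :=
  wedgeLift_wedge _ _ _ a b

theorem sum_map_handleClass (m : Multiset (A × A)) :
    (m.map fun p => handleClass p.1 p.2).sum = (m : (stableCon A).Quotient) := by
  induction m using Multiset.induction_on with
  | empty => rfl
  | cons p m ih =>
    rw [Multiset.map_cons, Multiset.sum_cons, ih]
    rfl

theorem coe_ofWedge_wedgeInvariant [Fintype ι] (V : ι ⊕ ι → A) :
    (ofWedge (wedgeInvariant V) : (stableCon A).Quotient) = (handles V : Multiset (A × A)) := by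
  rw [wedgeInvariant, map_sum, ← AddUnits.coeHom_apply, map_sum, ← sum_map_handleClass, handles,
    Multiset.map_map]
  exact Finset.sum_congr rfl fun j _ => congrArg AddUnits.val (ofWedge_wedge _ _)

theorem stablyEquiv_of_wedgeInvariant_eq [Fintype ι] [Fintype κ] {V : ι ⊕ ι → A} {W : κ ⊕ κ → A}
    (h : wedgeInvariant V = wedgeInvariant W) : StablyEquiv (handles V) (handles W) := by
  refine coe_eq_coe_iff_stablyEquiv.1 ?_
  rw [← coe_ofWedge_wedgeInvariant, ← coe_ofWedge_wedgeInvariant, h]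

end HandleClass

end

/-- Proposition 30: two generating colouring vectors are related by a finite sequence of
`Λ₁`- and `Λ₂`-moves (and their inverses) if and only if their wedge invariants in
`⋀²_ℤ A` coincide. -/
theorem lambdaMove_eqvGen_iff_wedge_invariant_eq {A : Type*} [AddCommGroup A] [AddGroup.FG A]
    {g₁ g₂ : ℕ} (V₁ : Fin g₁ ⊕ Fin g₁ → A) (V₂ : Fin g₂ ⊕ Fin g₂ → A)
    (h₁ : AddSubgroup.closure (Set.range V₁) = ⊤)
    (h₂ : AddSubgroup.closure (Set.range V₂) = ⊤) :
    Relation.EqvGen LambdaMove ⟨g₁, V₁, h₁⟩ ⟨g₂, V₂, h₂⟩ ↔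
      ∑ j : Fin g₁, wedge (V₁ (Sum.inl j)) (V₁ (Sum.inr j)) =
        ∑ j : Fin g₂, wedge (V₂ (Sum.inl j)) (V₂ (Sum.inr j)) :=
  ⟨wedgeInvariant_eq_of_eqvGen, fun h => (stablyEquiv_of_wedgeInvariant_eq h).eqvGen⟩
end

section
/- Let A be an additive commutative group, t : A ≃+ A an automorphism, m a natural number, M an m × m integer matrix, c : Fin m → ℤ, V : Fin m → A, and x, y ∈ A. Let Ṽ : Fin (m+2) → A be V extended by x (in position m) and y (in position m+1). (a) Let M̃ be the (m+2) × (m+2) integer matrix that agrees with M on the first m rows and columns, has (M̃ i m) = c i and (M̃ i (m+1)) = 0 for i < m, has row m equal to (c₀, …, c_{m−1}, 0, −1), and has row m+1 identically zero. If the twisted Seifert equation holds for the extended data, i.e. ∑_j (M̃ i j) • t(Ṽ j) = ∑_j (M̃ j i) • Ṽ j for every i, then x = 0 and t y = ∑_i c i • (t (V i) − V i). (b) Similarly, let M̃' be the (m+2) × (m+2) integer matrix that agrees with Mᵀ on the first m rows and columns, has (M̃' i m) = c i and (M̃' i (m+1)) = 0 for i < m, has row m equal to (c₀, …, c_{m−1},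 0, 0), and has row m+1 equal to (0, …, 0, 1, 0). If ∑_j (M̃' i j) • t(Ṽ j) = ∑_j (M̃' j i) • Ṽ j for every i, then x = 0 and y = ∑_i c i • (t (V i) − V i). (This is the computation of Equation (23) in the proof of Proposition 13: under a Λ₂-move, the two new entries of the colouring vector are forced to be 0 and (t−1)/t · ∑ cᵢvᵢ, respectively 0 and (t−1) · ∑ cᵢvᵢ.) -/
/-!
The two appended basis elements pair with each other only through the entries `a` in position
`(m, m + 1)` and `b` in position `(m + 1, m)`. The last row of the twisted Seifert equation
therefore reads `b • t x = a • x`, and `y` enters row `m` only through `a • t y` on the left and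
`b • y` on the right. For `(a, b) = (-1, 0)` and `(a, b) = (0, 1)` the last row says `x = 0`,
row `m` can be solved for `t y`, respectively `y`, and the first `m` rows reduce to the equation
for the original matrix.
-/

open Matrix

/-- The twisted Seifert equation `N (t · W) = Nᵀ W`, componentwise: `W` is a colouring vector of
the surface data `N`, where `t` is the action of the generator of the cyclic group. -/
def IsTwistedSeifert {R A ι : Type*} [Semiring R] [AddCommMonoid A] [Module R A] [Fintype ι]
    (t : A →+ A) (N : Matrix ι ι R) (W : ι → A) : Prop :=
  ∀ i, ∑ j, N i j • t (W j) = ∑ j, N j i • W j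

/-- The enlargement of a Seifert matrix by a `Λ₂`-move. The two new basis elements are indexed by
`Fin 2`; the first pairs with the old ones through `c`, and `a`, `b` are the pairings of the
first with the second and of the second with the first. The two matrices of a `Λ₂`-move have
`(a, b) = (-1, 0)` and `(a, b) = (0, 1)`. -/
def lambda2Matrix {R ι : Type*} [Zero R] (N : Matrix ι ι R) (c : ι → R) (a b : R) :
    Matrix (ι ⊕ Fin 2) (ι ⊕ Fin 2) R :=
  fromBlocks N (of fun i => ![c i, 0]) (of ![c, 0]) !![0, a; b, 0]

theorem eq_lambda2Matrix {R ι : Type*} [Zero R] {P : Matrix (ι ⊕ Fin 2) (ι ⊕ Fin 2) R}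
    {N : Matrix ι ι R} {c : ι → R} {a b : R}
    (h_block : ∀ i j, P (.inl i) (.inl j) = N i j)
    (h_col₀ : ∀ i, P (.inl i) (.inr 0) = c i) (h_col₁ : ∀ i, P (.inl i) (.inr 1) = 0)
    (h_row₀ : (∀ j, P (.inr 0) (.inl j) = c j) ∧
      P (.inr 0) (.inr 0) = 0 ∧ P (.inr 0) (.inr 1) = a)
    (h_row₁ : (∀ j, P (.inr 1) (.inl j) = 0) ∧
      P (.inr 1) (.inr 0) = b ∧ P (.inr 1) (.inr 1) = 0) :
    P = lambda2Matrix N c a b := by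
  ext (i | i) (j | j)
  · exact h_block i j
  · fin_cases j
    exacts [h_col₀ i, h_col₁ i]
  · fin_cases i
    exacts [h_row₀.1 j, h_row₁.1 j]
  · fin_cases i <;> fin_cases j
    exacts [h_row₀.2.1, h_row₀.2.2, h_row₁.2.1, h_row₁.2.2]

section Semiring

variable {R A ι κ : Type*} [Semiring R] [AddCommMonoid A] [Module R A] [Fintype ι] [Fintype κ]
  {t : A →+ A} {N : Matrix ι ι R}

theorem isTwistedSeifert_submatrix_equiv (e : κ ≃ ι) {W : ι → A} :
    IsTwistedSeifert t (N.submatrix e e) (W ∘ e) ↔ IsTwistedSeifert t N W := by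
  refine e.forall_congr fun i => ?_
  rw [← e.sum_comp fun j => N (e i) j • t (W j), ← e.sum_comp fun j => N j (e i) • W j]
  rfl

variable {c : ι → R} {a b : R} {V : ι → A} {x y : A}

theorem isTwistedSeifert_lambda2Matrix_iff :
    IsTwistedSeifert t (lambda2Matrix N c a b) (Sum.elim V ![x, y]) ↔
      (∀ i, ∑ j, N i j • t (V j) + c i • t x = ∑ j, N j i • V j + c i • x) ∧
        ∑ j, c j • t (V j) + a • t y = ∑ j, c j • V j + b • y ∧ b • t x = a • x := by
  simp [IsTwistedSeifert, lambda2Matrix, Fin.forall_fin_two]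

theorem isTwistedSeifert_lambda2Matrix_iff_of_smul_eq_smul_iff
    (h_last : b • t x = a • x ↔ x = 0) :
    IsTwistedSeifert t (lambda2Matrix N c a b) (Sum.elim V ![x, y]) ↔
      IsTwistedSeifert t N V ∧ x = 0 ∧
        ∑ j, c j • t (V j) + a • t y = ∑ j, c j • V j + b • y := by
  rw [isTwistedSeifert_lambda2Matrix_iff, h_last, and_comm (b := x = 0)]
  refine and_congr_left fun ⟨hx, _⟩ => ?_
  simp only [IsTwistedSeifert, hx, map_zero, smul_zero, add_zero]

end Semiring

section Ring

variable {R A ι κ : Type*} [Ring R] [AddCommGroup A] [Module R A] [Fintype ι] [Fintype κ]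
  {t : A →+ A} {N : Matrix ι ι R} {c : ι → R} {V : ι → A} {x y : A}

theorem isTwistedSeifert_lambda2Matrix_neg_one_zero_iff :
    IsTwistedSeifert t (lambda2Matrix N c (-1) 0) (Sum.elim V ![x, y]) ↔
      IsTwistedSeifert t N V ∧ x = 0 ∧ t y = ∑ i, c i • (t (V i) - V i) := by
  have h_last : (0 : R) • t x = (-1 : R) • x ↔ x = 0 := by
    rw [zero_smul, neg_one_smul, zero_eq_neg]
  rw [isTwistedSeifert_lambda2Matrix_iff_of_smul_eq_smul_iff h_last]
  simp only [neg_one_smul, zero_smul, add_zero, smul_sub, Finset.sum_sub_distrib]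
  rw [← sub_eq_add_neg, sub_eq_iff_eq_add', eq_sub_iff_add_eq, eq_comm (b := _ + _)]

theorem isTwistedSeifert_lambda2Matrix_zero_one_iff (ht : Function.Injective t) :
    IsTwistedSeifert t (lambda2Matrix N c 0 1) (Sum.elim V ![x, y]) ↔
      IsTwistedSeifert t N V ∧ x = 0 ∧ y = ∑ i, c i • (t (V i) - V i) := by
  have h_last : (1 : R) • t x = (0 : R) • x ↔ x = 0 := by
    rw [one_smul, zero_smul, map_eq_zero_iff t ht]
  rw [isTwistedSeifert_lambda2Matrix_iff_of_smul_eq_smul_iff h_last]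
  simp only [one_smul, zero_smul, add_zero, smul_sub, Finset.sum_sub_distrib]
  rw [eq_sub_iff_add_eq', eq_comm (b := _ + _)]

theorem lambda2_colouring_entries_general (t : A →+ A) (ht : Function.Injective t)
    (M : Matrix ι ι R) (c : ι → R) (V : ι → A) (x y : A) (e : ι ⊕ Fin 2 ≃ κ)
    (Vt : κ → A) (hVt : Vt ∘ e = Sum.elim V ![x, y])
    (Mt : Matrix κ κ R) (hMt : Mt.submatrix e e = lambda2Matrix M c (-1) 0)
    (Mt' : Matrix κ κ R) (hMt' : Mt'.submatrix e e = lambda2Matrix Mᵀ c 0 1) :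
    (IsTwistedSeifert t Mt Vt ↔
        IsTwistedSeifert t M V ∧ x = 0 ∧ t y = ∑ i, c i • (t (V i) - V i)) ∧
      (IsTwistedSeifert t Mt' Vt ↔
        IsTwistedSeifert t Mᵀ V ∧ x = 0 ∧ y = ∑ i, c i • (t (V i) - V i)) := by
  constructor
  · rw [← isTwistedSeifert_submatrix_equiv e, hMt, hVt,
      isTwistedSeifert_lambda2Matrix_neg_one_zero_iff]
  · rw [← isTwistedSeifert_submatrix_equiv e, hMt', hVt,
      isTwistedSeifert_lambda2Matrix_zero_one_iff ht]

end Ring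

/-- The computation of Equation (23): under a `Λ₂`-move, if the twisted Seifert equation holds
for the stabilized surface data, then the two new entries of the colouring vector are forced to
be `0` and `(t−1)/t · ∑ cᵢvᵢ` (case (a)), respectively `0` and `(t−1) · ∑ cᵢvᵢ` (case (b)). -/
theorem lambda2_colouring_entries {A : Type*} [AddCommGroup A] (t : A ≃+ A)
    (m : ℕ) (M : Matrix (Fin m) (Fin m) ℤ) (c : Fin m → ℤ) (V : Fin m → A) (x y : A)
    (Vt : Fin (m + 2) → A)
    (hVt : ∀ j : Fin m, Vt (Fin.castAdd 2 j) = V j)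
    (hVx : Vt ⟨m, by omega⟩ = x)
    (hVy : Vt ⟨m + 1, by omega⟩ = y)
    -- case (a): the matrix M̃
    (Mt : Matrix (Fin (m + 2)) (Fin (m + 2)) ℤ)
    (hMt : ∀ i j : Fin m, Mt (Fin.castAdd 2 i) (Fin.castAdd 2 j) = M i j)
    (hMtc : ∀ i : Fin m, Mt (Fin.castAdd 2 i) ⟨m, by omega⟩ = c i)
    (hMt0 : ∀ i : Fin m, Mt (Fin.castAdd 2 i) ⟨m + 1, by omega⟩ = 0)
    (hMtrowm : (∀ j : Fin m, Mt ⟨m, by omega⟩ (Fin.castAdd 2 j) = c j) ∧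
      Mt ⟨m, by omega⟩ ⟨m, by omega⟩ = 0 ∧ Mt ⟨m, by omega⟩ ⟨m + 1, by omega⟩ = -1)
    (hMtrowlast : ∀ j : Fin (m + 2), Mt ⟨m + 1, by omega⟩ j = 0)
    -- case (b): the matrix M̃'
    (Mt' : Matrix (Fin (m + 2)) (Fin (m + 2)) ℤ)
    (hMt' : ∀ i j : Fin m, Mt' (Fin.castAdd 2 i) (Fin.castAdd 2 j) = M j i)
    (hMt'c : ∀ i : Fin m, Mt' (Fin.castAdd 2 i) ⟨m, by omega⟩ = c i)
    (hMt'0 : ∀ i : Fin m, Mt' (Fin.castAdd 2 i) ⟨m + 1, by omega⟩ = 0)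
    (hMt'rowm : (∀ j : Fin m, Mt' ⟨m, by omega⟩ (Fin.castAdd 2 j) = c j) ∧
      Mt' ⟨m, by omega⟩ ⟨m, by omega⟩ = 0 ∧ Mt' ⟨m, by omega⟩ ⟨m + 1, by omega⟩ = 0)
    (hMt'rowlast : (∀ j : Fin m, Mt' ⟨m + 1, by omega⟩ (Fin.castAdd 2 j) = 0) ∧
      Mt' ⟨m + 1, by omega⟩ ⟨m, by omega⟩ = 1 ∧ Mt' ⟨m + 1, by omega⟩ ⟨m + 1, by omega⟩ = 0) :
    ((∀ i : Fin (m + 2), ∑ j, Mt i j • t (Vt j) = ∑ j, Mt j i • Vt j) →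
        x = 0 ∧ t y = ∑ i : Fin m, c i • (t (V i) - V i)) ∧
    ((∀ i : Fin (m + 2), ∑ j, Mt' i j • t (Vt j) = ∑ j, Mt' j i • Vt j) →
        x = 0 ∧ y = ∑ i : Fin m, c i • (t (V i) - V i)) := by
  obtain ⟨h_a, h_b⟩ := lambda2_colouring_entries_general (t : A →+ A) t.injective M c V x y
    finSumFinEquiv Vt (funext (Sum.rec hVt (Fin.forall_fin_two.2 ⟨hVx, hVy⟩)))
    Mt (eq_lambda2Matrix hMt hMtc hMt0 hMtrowm ⟨fun _ => hMtrowlast _, hMtrowlast _, hMtrowlast _⟩)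
    Mt' (eq_lambda2Matrix hMt' hMt'c hMt'0 hMt'rowm hMt'rowlast)
  exact ⟨fun h => (h_a.1 h).2, fun h => (h_b.1 h).2⟩
end
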